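/- For every n ≥ 1, θ(K_{1,n,n}) = θ(K_{2,n,n}) whenever n ≡ 0 (mod 4), and both equal n/4 + 1. -/

import Mathlib

open SimpleGraph

/-- A simple graph is planar if it admits a drawing in the plane: an injective
placement of vertices and, for each edge, an injective continuous arc joining
the images of its endpoints, such that arcs avoid vertex images in their
interiors and distinct arcs meet only at vertex images. -/
def IsPlanar {V : Type*} (G : SimpleGraph V) : Prop :=
  ∃ (f : V → ℝ × ℝ) (γ : G.edgeSet → (Set.Icc (0:ℝ) 1 → ℝ × ℝ)),
    Function.Injective f ∧
    (∀ e : G.edgeSet, Continuous (γ e)) ∧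
    (∀ e : G.edgeSet, ∃ u v : V, (e : Sym2 V) = s(u, v) ∧
      γ e ⟨0, by norm_num⟩ = f u ∧ γ e ⟨1, by norm_num⟩ = f v) ∧
    (∀ e : G.edgeSet, Function.Injective (γ e)) ∧
    (∀ e : G.edgeSet, ∀ t : Set.Icc (0:ℝ) 1, (t : ℝ) ≠ 0 → (t : ℝ) ≠ 1 →
      ∀ v : V, γ e t ≠ f v) ∧
    (∀ e e' : G.edgeSet, e ≠ e' → ∀ s t : Set.Icc (0:ℝ) 1,
      γ e s = γ e' t → γ e s ∈ Set.range f)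

/-- The thickness of a graph: the least `n` such that `G` is the union of `n`
planar subgraphs. -/
noncomputable def thickness {V : Type*} (G : SimpleGraph V) : ℕ :=
  sInf {n : ℕ | ∃ H : Fin n → SimpleGraph V,
    (∀ i, H i ≤ G) ∧ (∀ i, IsPlanar (H i)) ∧ (⨆ i, H i) = G}

/-!
For the lower bound, a triangle-free planar graph with `v ≥ 1` vertices has at most `2 * v - 2`
edges, so `n / 4` planar graphs do not cover `K_{n,n}`. The edge bound comes from MacLane's
criterion, that the cycle space modulo 2 is generated by cycles of which at most two share any given
edge. The square grid satisfies the criterion by means of its unit squares, and the criterion passes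
to subgraphs and contractions. Cutting the arcs of a drawing of `G` at their midpoints and replacing
the halves by the nearby points of a fine grid shows `G` to be a minor of the grid, so that neither
the Jordan curve theorem nor Euler's formula is needed.

For the upper bound, write `n = 4 * p` and cut both sides of `K_{n,n}` into `p` blocks of four. Each
block gets a planar layer, in which it is joined to half of the vertices of the other blocks. The
edges that are left over lie on a path, and a path together with two vertices that are joined to
everything is planar.
-/

section Chains

variable {V W : Type*} {G H : SimpleGraph V}

/-- Finite sets of unordered pairs of vertices, as vectors over the two-element field. -/
abbrev Chain (V : Type*) := Sym2 V →₀ ZMod 2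

/-- The boundary map of simplicial homology modulo 2: an edge goes to the sum of its endpoints. -/
noncomputable def boundary : Chain V →ₗ[ZMod 2] (V →₀ ZMod 2) :=
  Finsupp.linearCombination (ZMod 2)
    (Sym2.lift ⟨fun x y => Finsupp.single x 1 + Finsupp.single y 1, fun _ _ => add_comm _ _⟩)

@[simp]
lemma boundary_single (x y : V) :
    boundary (Finsupp.single s(x, y) 1) = Finsupp.single x 1 + Finsupp.single y 1 := by
  simp [boundary]

/-- The cycle space of a graph modulo 2. -/
noncomputable def cycleSpace (G : SimpleGraph V) : Submodule (ZMod 2) (Chain V) :=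
  LinearMap.ker boundary ⊓ Finsupp.supported (ZMod 2) (ZMod 2) G.edgeSet

lemma cycleSpace_mono (h : G ≤ H) : cycleSpace G ≤ cycleSpace H :=
  inf_le_inf_left _ (Finsupp.supported_mono (edgeSet_mono h))

/-- A family of vectors in which every coordinate is used by at most two members, as every edge of
a plane graph borders at most two faces. -/
def TwoSparse {E K : Type*} [Zero K] [DecidableEq K] (C : Finset (E →₀ K)) : Prop :=
  ∀ e, (C.filter (· e ≠ 0)).card ≤ 2

/-- MacLane's planarity criterion, that the cycle space has a two-sparse generating family.
Asking only that finitely many cycles be generated at a time makes it apply to infinite graphs. -/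
def MacLane (G : SimpleGraph V) : Prop :=
  ∀ F : Finset (Chain V), (F : Set (Chain V)) ⊆ cycleSpace G →
    ∃ C : Finset (Chain V), TwoSparse C ∧ (C : Set (Chain V)) ⊆ cycleSpace G ∧
      (F : Set (Chain V)) ⊆ Submodule.span (ZMod 2) (C : Set (Chain V))

end Chains

section Grid

/-- The square grid on the first quadrant. -/
abbrev grid : SimpleGraph (ℕ × ℕ) := hasse ℕ □ hasse ℕ

lemma grid_adj_succ_left (i j : ℕ) : grid.Adj (i, j) (i + 1, j) := by
  simp [boxProd_adj, hasse_adj, Nat.covBy_iff_add_one_eq]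

lemma grid_adj_succ_right (i j : ℕ) : grid.Adj (i, j) (i, j + 1) := by
  simp [boxProd_adj, hasse_adj, Nat.covBy_iff_add_one_eq]

lemma mem_edgeSet_grid {e : Sym2 (ℕ × ℕ)} : e ∈ grid.edgeSet ↔
    ∃ i j, e = s((i, j), (i + 1, j)) ∨ e = s((i, j), (i, j + 1)) := by
  refine ⟨?_, ?_⟩
  · induction e with | h x y => ?_
    obtain ⟨i, j⟩ := x
    obtain ⟨i', j'⟩ := y
    simp only [mem_edgeSet, boxProd_adj, hasse_adj, Nat.covBy_iff_add_one_eq]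
    rintro (⟨rfl | rfl, rfl⟩ | ⟨rfl | rfl, rfl⟩)
    exacts [⟨i, j, .inl rfl⟩, ⟨i', j, .inl Sym2.eq_swap⟩, ⟨i, j, .inr rfl⟩,
      ⟨i, j', .inr Sym2.eq_swap⟩]
  · rintro ⟨i, j, rfl | rfl⟩
    exacts [grid_adj_succ_left i j, grid_adj_succ_right i j]

/-- The boundary of a unit square of the grid, given by its lower left corner. -/
noncomputable def unitSquare (x : ℕ × ℕ) : Chain (ℕ × ℕ) :=
  Finsupp.single s((x.1, x.2), (x.1 + 1, x.2)) 1 +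
    Finsupp.single s((x.1, x.2), (x.1, x.2 + 1)) 1 +
    Finsupp.single s((x.1, x.2 + 1), (x.1 + 1, x.2 + 1)) 1 +
    Finsupp.single s((x.1 + 1, x.2), (x.1 + 1, x.2 + 1)) 1

lemma unitSquare_mem_cycleSpace (x : ℕ × ℕ) : unitSquare x ∈ cycleSpace grid := by
  have mem_supported {e : Sym2 (ℕ × ℕ)} (he : e ∈ grid.edgeSet) :
      Finsupp.single e 1 ∈ Finsupp.supported (ZMod 2) (ZMod 2) grid.edgeSet :=
    Finsupp.single_mem_supported _ _ he
  refine ⟨?_, add_mem (add_mem (add_mem ?_ ?_) ?_) ?_⟩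
  · have cancel := ZModModule.add_self (G := ℕ × ℕ →₀ ZMod 2)
    simp only [SetLike.mem_coe, LinearMap.mem_ker, unitSquare, map_add, boundary_single]
    linear_combination (norm := module) cancel (.single (x.1, x.2) 1) +
      cancel (.single (x.1 + 1, x.2) 1) + cancel (.single (x.1, x.2 + 1) 1) +
      cancel (.single (x.1 + 1, x.2 + 1) 1)
  exacts [mem_supported (grid_adj_succ_left _ _), mem_supported (grid_adj_succ_right _ _),
    mem_supported (grid_adj_succ_left _ _), mem_supported (grid_adj_succ_right _ _)]

lemma eq_of_unitSquare_apply_ne_zero {x : ℕ × ℕ} {e : Sym2 (ℕ × ℕ)} (h : unitSquare x e ≠ 0) :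
    e = s((x.1, x.2), (x.1 + 1, x.2)) ∨ e = s((x.1, x.2), (x.1, x.2 + 1)) ∨
      e = s((x.1, x.2 + 1), (x.1 + 1, x.2 + 1)) ∨
      e = s((x.1 + 1, x.2), (x.1 + 1, x.2 + 1)) := by
  contrapose! h
  obtain ⟨h₁, h₂, h₃, h₄⟩ := h
  simp [unitSquare, Finsupp.single_eq_of_ne, h₁, h₂, h₃, h₄]

lemma twoSparse_of_subset_range_unitSquare {C : Finset (Chain (ℕ × ℕ))}
    (hC : (C : Set (Chain (ℕ × ℕ))) ⊆ Set.range unitSquare) : TwoSparse C := by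
  classical
  intro e
  by_cases he : e ∈ grid.edgeSet
  · suffices ∃ a b, ∀ x, unitSquare x e ≠ 0 → x = a ∨ x = b by
      obtain ⟨a, b, hab⟩ := this
      refine (Finset.card_le_card fun z hz => ?_).trans
        (Finset.card_le_two (a := unitSquare a) (b := unitSquare b))
      obtain ⟨hzC, hze⟩ := Finset.mem_filter.mp hz
      obtain ⟨x, rfl⟩ := hC hzC
      rcases hab x hze with rfl | rfl <;> simp
    obtain ⟨i, j, rfl | rfl⟩ := mem_edgeSet_grid.mp he
    · refine ⟨(i, j), (i, j - 1), fun x hx => ?_⟩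
      have := eq_of_unitSquare_apply_ne_zero hx
      simp only [Sym2.eq_iff, Prod.ext_iff] at this ⊢
      omega
    · refine ⟨(i, j), (i - 1, j), fun x hx => ?_⟩
      have := eq_of_unitSquare_apply_ne_zero hx
      simp only [Sym2.eq_iff, Prod.ext_iff] at this ⊢
      omega
  · rw [Finset.filter_false_of_mem fun z hz => not_not.mpr ?_]
    · simp
    · obtain ⟨x, rfl⟩ := hC hz
      exact Finsupp.notMem_support_iff.mp fun h =>
        he ((unitSquare_mem_cycleSpace x).2 (Finset.mem_coe.mpr h))

/-- The path that runs from the origin up the vertical axis and then horizontally to `x`. -/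
noncomputable def pathChain (x : ℕ × ℕ) : Chain (ℕ × ℕ) :=
  ∑ j ∈ Finset.range x.2, Finsupp.single s((0, j), (0, j + 1)) 1 +
    ∑ i ∈ Finset.range x.1, Finsupp.single s((i, x.2), (i + 1, x.2)) 1

lemma pathChain_succ_left (i j : ℕ) :
    pathChain (i + 1, j) = pathChain (i, j) + Finsupp.single s((i, j), (i + 1, j)) 1 := by
  simp only [pathChain, Finset.sum_range_succ, add_assoc]

lemma pathChain_zero_succ (j : ℕ) :
    pathChain (0, j + 1) = pathChain (0, j) + Finsupp.single s((0, j), (0, j + 1)) 1 := by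
  simp only [pathChain, Finset.sum_range_succ, Finset.range_zero, Finset.sum_empty, add_zero]

/-- The linear extension of `pathChain`: joins every point of a vertex chain to the origin. -/
noncomputable def pathCone : (ℕ × ℕ →₀ ZMod 2) →ₗ[ZMod 2] Chain (ℕ × ℕ) :=
  Finsupp.linearCombination (ZMod 2) pathChain

lemma single_add_pathCone_boundary_mem_span {e : Sym2 (ℕ × ℕ)} (he : e ∈ grid.edgeSet) :
    Finsupp.single e 1 + pathCone (boundary (Finsupp.single e 1)) ∈
      Submodule.span (ZMod 2) (Set.range unitSquare) := by
  have cancel := ZModModule.add_self (G := Chain (ℕ × ℕ))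
  have pathCone_single (x : ℕ × ℕ) : pathCone (Finsupp.single x 1) = pathChain x := by
    simp [pathCone]
  obtain ⟨i, j, rfl | rfl⟩ := mem_edgeSet_grid.mp he <;>
    simp only [boundary_single, map_add, pathCone_single]
  · convert Submodule.zero_mem _
    rw [pathChain_succ_left]
    linear_combination (norm := module)
      cancel (pathChain (i, j)) + cancel (.single s((i, j), (i + 1, j)) 1)
  · clear he
    induction i with
    | zero =>
      convert Submodule.zero_mem _
      rw [pathChain_zero_succ]
      linear_combination (norm := module)
        cancel (pathChain (0, j)) + cancel (.single s((0, j), (0, j + 1)) 1)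
    | succ i ih =>
      convert add_mem ih (Submodule.subset_span (Set.mem_range_self (i, j))) using 1
      rw [pathChain_succ_left, pathChain_succ_left, unitSquare]
      linear_combination (norm := module) -cancel (.single s((i, j), (i, j + 1)) 1)

lemma cycleSpace_grid_le_span_unitSquare :
    cycleSpace grid ≤ Submodule.span (ZMod 2) (Set.range unitSquare) := by
  rintro z ⟨hboundary, hsupp⟩
  suffices z + pathCone (boundary z) ∈ Submodule.span (ZMod 2) (Set.range unitSquare) by
    simpa [LinearMap.mem_ker.mp hboundary] using this
  let S := (Submodule.span (ZMod 2) (Set.range unitSquare)).comap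
    (LinearMap.id + pathCone ∘ₗ boundary)
  suffices Finsupp.supported (ZMod 2) (ZMod 2) grid.edgeSet ≤ S from this hsupp
  rw [Finsupp.supported_eq_span_single, Submodule.span_le]
  rintro _ ⟨e, he, rfl⟩
  exact single_add_pathCone_boundary_mem_span he

lemma macLane_grid : MacLane grid := by
  intro F hF
  obtain ⟨C, hC, hFC⟩ := Submodule.subset_span_finite_of_subset_span
    (hF.trans cycleSpace_grid_le_span_unitSquare)
  refine ⟨C, twoSparse_of_subset_range_unitSquare hC, hC.trans ?_, hFC⟩
  rintro _ ⟨x, rfl⟩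
  exact unitSquare_mem_cycleSpace x

end Grid

section Deletion

/-- The projection along `c₀` onto the hyperplane of vectors that vanish at `e`. -/
noncomputable def clearCoord {E K : Type*} [Field K] (c₀ : E →₀ K) (e : E) :
    (E →₀ K) →ₗ[K] (E →₀ K) :=
  LinearMap.id - ((c₀ e)⁻¹ • Finsupp.lapply e).smulRight c₀

variable {E K V : Type*} [Field K] {c₀ : E →₀ K} {C : Finset (E →₀ K)}
  {G H : SimpleGraph V}

lemma clearCoord_apply (e : E) (z : E →₀ K) :
    clearCoord c₀ e z = z - ((c₀ e)⁻¹ * z e) • c₀ := rfl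

lemma clearCoord_self {e : E} (h : c₀ e ≠ 0) : clearCoord c₀ e c₀ = 0 := by
  simp [clearCoord_apply, h]

lemma span_image_clearCoord [DecidableEq (E →₀ K)] (hc₀ : c₀ ∈ C) {e : E} (h : c₀ e ≠ 0) :
    Submodule.span K (C.image (clearCoord c₀ e) : Set (E →₀ K)) =
      Submodule.span K C ⊓ LinearMap.ker (Finsupp.lapply e) := by
  rw [Finset.coe_image, Submodule.span_image]
  refine le_antisymm ?_ fun z hz => ⟨z, hz.1, ?_⟩
  · rintro _ ⟨z, hz, rfl⟩
    refine ⟨sub_mem hz (Submodule.smul_mem _ _ (Submodule.subset_span hc₀)), ?_⟩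
    simp [clearCoord_apply, mul_right_comm _ (z e), h]
  · have hze : z e = 0 := hz.2
    simp [clearCoord_apply, hze]

variable [DecidableEq K]

/-- Clearing the coordinate `e` along a member of the family merges the two faces along `e`. -/
lemma TwoSparse.image_clearCoord [DecidableEq (E →₀ K)] (hC : TwoSparse C) (hc₀ : c₀ ∈ C) {e : E}
    (h : c₀ e ≠ 0) : TwoSparse (C.image (clearCoord c₀ e)) := by
  intro f
  rw [Finset.filter_image]
  refine Finset.card_image_le.trans ?_
  by_cases hf : c₀ f = 0
  · simpa [clearCoord_apply, hf] using hC f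
  · have card_erase_le (g : E) (hg : c₀ g ≠ 0) : ((C.filter (· g ≠ 0)).erase c₀).card ≤ 1 := by
      rw [Finset.card_erase_of_mem (Finset.mem_filter.mpr ⟨hc₀, hg⟩)]
      exact Nat.sub_le_of_le_add (hC g)
    refine (Finset.card_le_card fun c hc => ?_).trans
      ((Finset.card_union_le _ _).trans (add_le_add (card_erase_le f hf) (card_erase_le e h)))
    obtain ⟨hcC, hcf⟩ := Finset.mem_filter.mp hc
    have hne : c ≠ c₀ := by
      rintro rfl
      exact hcf (by rw [clearCoord_self h, Finsupp.zero_apply])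
    suffices c f ≠ 0 ∨ c e ≠ 0 by simpa [hcC, hne] using this
    contrapose! hcf
    simp [clearCoord_apply, hcf.1, hcf.2]

lemma TwoSparse.exists_span_eq_inf_ker_lapply (hC : TwoSparse C) (e : E) :
    ∃ C' : Finset (E →₀ K), TwoSparse C' ∧
      Submodule.span K (C' : Set (E →₀ K)) =
        Submodule.span K C ⊓ LinearMap.ker (Finsupp.lapply e) := by
  classical
  by_cases h : ∃ c₀ ∈ C, c₀ e ≠ 0
  · obtain ⟨c₀, hc₀, hc₀e⟩ := h
    exact ⟨_, hC.image_clearCoord hc₀ hc₀e, span_image_clearCoord hc₀ hc₀e⟩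
  · refine ⟨C, hC, (inf_eq_left.mpr (Submodule.span_le.mpr fun c hc => ?_)).symm⟩
    push Not at h
    exact h c hc

lemma TwoSparse.exists_span_eq_inf_supported_compl (hC : TwoSparse C) (D : Finset E) :
    ∃ C' : Finset (E →₀ K), TwoSparse C' ∧
      Submodule.span K (C' : Set (E →₀ K)) =
        Submodule.span K C ⊓ Finsupp.supported K K (D : Set E)ᶜ := by
  classical
  induction D using Finset.induction_on with
  | empty => exact ⟨C, hC, by simp⟩
  | insert e D _ ih =>
    obtain ⟨C₁, hC₁, hspan₁⟩ := ih
    obtain ⟨C₂, hC₂, hspan₂⟩ := hC₁.exists_span_eq_inf_ker_lapply e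
    refine ⟨C₂, hC₂, ?_⟩
    rw [hspan₂, hspan₁, inf_assoc]
    congr 1
    ext z
    simp only [Submodule.mem_inf, Finsupp.mem_supported', LinearMap.mem_ker, Finsupp.lapply_apply,
      Set.mem_compl_iff, Finset.mem_coe, not_not, Finset.forall_mem_insert, and_comm]

lemma MacLane.mono (hH : MacLane H) (h : G ≤ H) : MacLane G := by
  classical
  intro F hF
  obtain ⟨C, hC, hCH, hFC⟩ := hH F (hF.trans (cycleSpace_mono h))
  let D := (C.biUnion (·.support)).filter (· ∉ G.edgeSet)
  obtain ⟨C', hC', hspan⟩ := hC.exists_span_eq_inf_supported_compl D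
  have mem_span {z : Chain V} : z ∈ Submodule.span (ZMod 2) (C' : Set (Chain V)) ↔
      z ∈ Submodule.span (ZMod 2) (C : Set (Chain V)) ∧ ∀ e ∈ D, z e = 0 := by
    simp [hspan, Finsupp.mem_supported']
  refine ⟨C', hC', fun c hc => ?_, fun z hz => mem_span.mpr ⟨hFC hz, fun e he => ?_⟩⟩
  · obtain ⟨hcC, hcD⟩ := mem_span.mp (Submodule.subset_span hc)
    refine ⟨(Submodule.span_le.mpr hCH hcC).1, fun e he => by_contra fun heG => ?_⟩
    have hsupp : Submodule.span (ZMod 2) (C : Set (Chain V)) ≤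
        Finsupp.supported (ZMod 2) (ZMod 2) (C.biUnion (·.support) : Set (Sym2 V)) :=
      Submodule.span_le.mpr fun c hc => Finset.coe_subset.mpr (Finset.subset_biUnion_of_mem _ hc)
    exact Finsupp.mem_support_iff.mp he (hcD e (Finset.mem_filter.mpr ⟨hsupp hcC he, heG⟩))
  · exact Finsupp.notMem_support_iff.mp fun hez => (Finset.mem_filter.mp he).2 ((hF hz).2 hez)

end Deletion

section Contraction

variable {V W : Type*} {G L : SimpleGraph V} {H : SimpleGraph W} {π : V → W}

open Classical in
/-- The image of a chain under the contraction of each fibre of `π` to a point; edges inside a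
fibre disappear. -/
noncomputable def contract (π : V → W) : Chain V →ₗ[ZMod 2] Chain W :=
  Finsupp.linearCombination (ZMod 2) fun e =>
    if (e.map π).IsDiag then 0 else Finsupp.single (e.map π) 1

lemma contract_single_of_isDiag {e : Sym2 V} (h : (e.map π).IsDiag) :
    contract π (Finsupp.single e 1) = 0 := by
  simp [contract, h]

lemma contract_single_of_not_isDiag {e : Sym2 V} (h : ¬(e.map π).IsDiag) :
    contract π (Finsupp.single e 1) = Finsupp.single (e.map π) 1 := by
  simp [contract, h]

lemma exists_map_eq_of_contract_apply_ne_zero {z : Chain V} {e : Sym2 W}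
    (h : contract π z e ≠ 0) : ¬e.IsDiag ∧ ∃ e', z e' ≠ 0 ∧ e'.map π = e := by
  rw [contract, Finsupp.linearCombination_apply, Finsupp.sum_apply] at h
  obtain ⟨e', he', hne⟩ := Finset.exists_ne_zero_of_sum_ne_zero h
  dsimp only at hne
  split_ifs at hne with hdiag
  · simp at hne
  · obtain rfl : e'.map π = e := by
      by_contra hmap
      simp [hmap] at hne
    exact ⟨hdiag, e', Finsupp.mem_support_iff.mp he', rfl⟩

lemma boundary_contract (z : Chain V) :
    boundary (contract π z) = Finsupp.mapDomain π (boundary z) := by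
  suffices boundary ∘ₗ contract π = Finsupp.lmapDomain (ZMod 2) (ZMod 2) π ∘ₗ boundary from
    LinearMap.congr_fun this z
  refine Finsupp.lhom_ext' fun e => LinearMap.ext_ring ?_
  induction e with | h x y => ?_
  simp only [LinearMap.comp_apply, Finsupp.lsingle_apply, boundary_single, map_add,
    Finsupp.lmapDomain_apply, Finsupp.mapDomain_single]
  by_cases h : π x = π y
  · rw [contract_single_of_isDiag (by simpa using h), map_zero, h, ZModModule.add_self]
  · rw [contract_single_of_not_isDiag (by simpa using h), Sym2.map_mk, boundary_single]

lemma contract_eq_zero_of_mem_supported (hL : ∀ x y, L.Adj x y → π x = π y) {q : Chain V}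
    (hq : q ∈ Finsupp.supported (ZMod 2) (ZMod 2) L.edgeSet) : contract π q = 0 := by
  ext e
  by_contra h
  obtain ⟨hdiag, e', he', rfl⟩ := exists_map_eq_of_contract_apply_ne_zero h
  have he'L := hq (Finsupp.mem_support_iff.mpr he')
  induction e' with | h x y => exact hdiag (hL x y he'L)

lemma boundary_single_mem_supported {S : Set V} {e : Sym2 V} (h : ∀ x ∈ e, x ∈ S) :
    boundary (Finsupp.single e 1) ∈ Finsupp.supported (ZMod 2) (ZMod 2) S := by
  induction e with | h x y => ?_
  rw [boundary_single]
  exact add_mem (Finsupp.single_mem_supported _ _ (h x (Sym2.mem_mk_left x y)))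
    (Finsupp.single_mem_supported _ _ (h y (Sym2.mem_mk_right x y)))

lemma exists_boundary_eq_of_reachable {x y : V} (h : G.Reachable x y) :
    ∃ q ∈ Finsupp.supported (ZMod 2) (ZMod 2) G.edgeSet,
      boundary q = Finsupp.single x 1 + Finsupp.single y 1 := by
  obtain ⟨p⟩ := h
  induction p with
  | nil => exact ⟨0, zero_mem _, by rw [map_zero, ZModModule.add_self]⟩
  | @cons x y z hxy _ ih =>
    obtain ⟨q, hq, hboundary⟩ := ih
    refine ⟨Finsupp.single s(x, y) 1 + q,
      add_mem (Finsupp.single_mem_supported _ _ hxy) hq, ?_⟩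
    rw [map_add, boundary_single, hboundary]
    linear_combination (norm := module) ZModModule.add_self (Finsupp.single y (1 : ZMod 2))

/-- A vertex chain bounds if it has even weight on every fibre and the fibres are connected. -/
lemma exists_boundary_eq_of_mapDomain_eq_zero {S : Set V}
    (hS : ∀ x ∈ S, ∀ y ∈ S, π x = π y → L.Reachable x y) {b : V →₀ ZMod 2}
    (hb : (b.support : Set V) ⊆ S) (hπ : Finsupp.mapDomain π b = 0) :
    ∃ q ∈ Finsupp.supported (ZMod 2) (ZMod 2) L.edgeSet, boundary q = b := by
  cases isEmpty_or_nonempty V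
  · exact ⟨0, zero_mem _, Subsingleton.elim _ _⟩
  let root (x : V) : V := Function.invFunOn π S (π x)
  have hroot (x : V) (hx : x ∈ S) : L.Reachable x (root x) :=
    hS x hx _ (Function.invFunOn_mem ⟨x, hx, rfl⟩) (Function.invFunOn_eq ⟨x, hx, rfl⟩).symm
  choose! path hpath hboundary using fun x hx => exists_boundary_eq_of_reachable (hroot x hx)
  refine ⟨b.sum fun x a => a • path x, sum_mem fun x hx =>
    Submodule.smul_mem _ _ (hpath x (hb hx)), ?_⟩
  calc boundary (b.sum fun x a => a • path x)
      = b.sum fun x a => Finsupp.single x a + Finsupp.single (root x) a := by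
        rw [Finsupp.sum, map_sum]
        refine Finset.sum_congr rfl fun x hx => ?_
        rw [map_smul, hboundary x (hb hx)]
        simp
    _ = b + Finsupp.mapDomain (Function.invFunOn π S) (Finsupp.mapDomain π b) := by
        rw [Finsupp.sum_add, Finsupp.sum_single, ← Finsupp.mapDomain_comp]
        rfl
    _ = b := by rw [hπ, Finsupp.mapDomain_zero, add_zero]

lemma exists_mem_cycleSpace_contract_eq {K : SimpleGraph V} (hLK : L ≤ K)
    (hL : ∀ x y, L.Adj x y → π x = π y) {S : Set V}
    (hS : ∀ x ∈ S, ∀ y ∈ S, π x = π y → L.Reachable x y) {g : Sym2 W → Sym2 V}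
    (hgK : ∀ e ∈ H.edgeSet, g e ∈ K.edgeSet) (hgS : ∀ e ∈ H.edgeSet, ∀ x ∈ g e, x ∈ S)
    (hgπ : ∀ e ∈ H.edgeSet, (g e).map π = e) {z : Chain W} (hz : z ∈ cycleSpace H) :
    ∃ z' ∈ cycleSpace K, contract π z' = z := by
  obtain ⟨hzboundary, hzH⟩ := hz
  let z₁ : Chain V := ∑ e ∈ z.support, z e • Finsupp.single (g e) 1
  have contract_z₁ : contract π z₁ = z := by
    rw [map_sum]
    refine (Finset.sum_congr rfl fun e he => ?_).trans (Finsupp.sum_single z)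
    have hdiag : ¬((g e).map π).IsDiag :=
      (hgπ e (hzH he)).symm ▸ H.not_isDiag_of_mem_edgeSet (hzH he)
    rw [map_smul, contract_single_of_not_isDiag hdiag, hgπ e (hzH he), Finsupp.smul_single_one]
  have z₁_mem : z₁ ∈ Finsupp.supported (ZMod 2) (ZMod 2) K.edgeSet :=
    sum_mem fun e he => Submodule.smul_mem _ _
      (Finsupp.single_mem_supported _ _ (hgK e (hzH he)))
  have boundary_z₁_mem : boundary z₁ ∈ Finsupp.supported (ZMod 2) (ZMod 2) S := by
    rw [map_sum]
    refine sum_mem fun e he => ?_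
    rw [map_smul]
    exact Submodule.smul_mem _ _ (boundary_single_mem_supported (hgS e (hzH he)))
  obtain ⟨q, hq, hqboundary⟩ := exists_boundary_eq_of_mapDomain_eq_zero hS boundary_z₁_mem
    (by rw [← boundary_contract, contract_z₁, LinearMap.mem_ker.mp hzboundary])
  refine ⟨z₁ + q, ⟨?_, add_mem z₁_mem (Finsupp.supported_mono (edgeSet_mono hLK) hq)⟩, ?_⟩
  · rw [SetLike.mem_coe, LinearMap.mem_ker, map_add, hqboundary, ZModModule.add_self]
  · rw [map_add, contract_eq_zero_of_mem_supported hL hq, contract_z₁, add_zero]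

/-- Contracting the edges of `L` turns `K` into `H`, whose edges `e` come from the edges `g e`. -/
lemma MacLane.of_contraction {K : SimpleGraph V} (hK : MacLane K) (hLK : L ≤ K)
    (hL : ∀ x y, L.Adj x y → π x = π y) {S : Set V}
    (hS : ∀ x ∈ S, ∀ y ∈ S, π x = π y → L.Reachable x y) {g : Sym2 W → Sym2 V}
    (hgK : ∀ e ∈ H.edgeSet, g e ∈ K.edgeSet) (hgS : ∀ e ∈ H.edgeSet, ∀ x ∈ g e, x ∈ S)
    (hgπ : ∀ e ∈ H.edgeSet, (g e).map π = e)
    (hKg : ∀ e ∈ K.edgeSet, ¬(e.map π).IsDiag → e ∈ g '' H.edgeSet) : MacLane H := by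
  classical
  have eq_of_contract_ne_zero (c : Chain V) (hc : c ∈ cycleSpace K) (e : Sym2 W)
      (he : contract π c e ≠ 0) : e ∈ H.edgeSet ∧ c (g e) ≠ 0 := by
    obtain ⟨hdiag, e', he', rfl⟩ := exists_map_eq_of_contract_apply_ne_zero he
    obtain ⟨e, heH, rfl⟩ := hKg e' (hc.2 (Finsupp.mem_support_iff.mpr he')) hdiag
    rw [hgπ e heH]
    exact ⟨heH, he'⟩
  intro F hF
  choose! lift hlift hcontract using fun z hz =>
    exists_mem_cycleSpace_contract_eq hLK hL hS hgK hgS hgπ (z := z) hz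
  obtain ⟨C, hC, hCK, hFC⟩ := hK (F.image lift) (by
    rw [Finset.coe_image, Set.image_subset_iff]
    exact fun z hz => hlift z (hF hz))
  refine ⟨C.image (contract π), fun e => ?_, ?_, fun z hz => ?_⟩
  · rw [Finset.filter_image]
    refine Finset.card_image_le.trans ((Finset.card_le_card ?_).trans (hC (g e)))
    intro c hc
    obtain ⟨hcC, hce⟩ := Finset.mem_filter.mp hc
    exact Finset.mem_filter.mpr ⟨hcC, (eq_of_contract_ne_zero c (hCK hcC) e hce).2⟩
  · rw [Finset.coe_image, Set.image_subset_iff]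
    refine fun c hc => ⟨?_, fun e he =>
      (eq_of_contract_ne_zero c (hCK hc) e (Finsupp.mem_support_iff.mp he)).1⟩
    rw [SetLike.mem_coe, LinearMap.mem_ker, boundary_contract, (hCK hc).1, Finsupp.mapDomain_zero]
  · rw [Finset.coe_image, Submodule.span_image, ← hcontract z (hF hz)]
    exact Submodule.mem_map_of_mem (hFC (Finset.mem_coe.mpr (Finset.mem_image_of_mem _ hz)))

lemma exists_forall_mem_eq_of_pairwise_disjoint [Nonempty W] {U : W → Set V}
    (hdisj : Pairwise (Function.onFun Disjoint U)) : ∃ π : V → W, ∀ w, ∀ x ∈ U w, π x = w := by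
  refine ⟨fun x => Classical.epsilon fun w => x ∈ U w, fun w x hx => hdisj.eq ?_⟩
  exact Set.not_disjoint_iff.mpr
    ⟨x, Classical.epsilon_spec (p := fun w => x ∈ U w) ⟨w, hx⟩, hx⟩

lemma reachable_iSup_spanningCoe_induce {U : W → Set V}
    (hconn : ∀ w, (G.induce (U w)).Connected) {w : W} {x y : V} (hx : x ∈ U w) (hy : y ∈ U w) :
    (⨆ w, (G.induce (U w)).spanningCoe).Reachable x y :=
  (((hconn w).preconnected ⟨x, hx⟩ ⟨y, hy⟩).map (Embedding.spanningCoe _).toHom).mono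
    (le_iSup (fun w => (G.induce (U w)).spanningCoe) w)

/-- The members of `U` are the branch sets of `H` as a minor of `G`. -/
lemma MacLane.of_branchSets (hG : MacLane G) {U : W → Set V}
    (hdisj : Pairwise (Function.onFun Disjoint U)) (hconn : ∀ w, (G.induce (U w)).Connected)
    (hadj : ∀ w w', H.Adj w w' → ∃ x ∈ U w, ∃ y ∈ U w', G.Adj x y) : MacLane H := by
  cases isEmpty_or_nonempty W
  · exact fun F hF => ⟨F, fun e => e.ind isEmptyElim, hF, Submodule.subset_span⟩
  have : Nonempty (Sym2 V) :=
    (hconn (Classical.arbitrary W)).nonempty.map fun x => s(x.1, x.1)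
  obtain ⟨π, hπ⟩ := exists_forall_mem_eq_of_pairwise_disjoint hdisj
  have hedge (e : Sym2 W) (he : e ∈ H.edgeSet) :
      ∃ e' ∈ G.edgeSet, (∀ x ∈ e', x ∈ ⋃ w, U w) ∧ e'.map π = e := by
    induction e with | h w w' => ?_
    obtain ⟨x, hx, y, hy, hxy⟩ := hadj w w' he
    refine ⟨s(x, y), hxy, ?_, by rw [Sym2.map_mk, hπ w x hx, hπ w' y hy]⟩
    exact Sym2.ball.mpr ⟨Set.mem_iUnion_of_mem w hx, Set.mem_iUnion_of_mem w' hy⟩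
  choose! g hgG hgU hgπ using hedge
  let L : SimpleGraph V := ⨆ w, (G.induce (U w)).spanningCoe
  have hL (x y : V) (h : L.Adj x y) : π x = π y := by
    obtain ⟨-, w, hx, hy⟩ : G.Adj x y ∧ ∃ w, x ∈ U w ∧ y ∈ U w := by simpa [L] using h
    rw [hπ w x hx, hπ w y hy]
  have hreach : ∀ x ∈ ⋃ w, U w, ∀ y ∈ ⋃ w, U w, π x = π y → L.Reachable x y := by
    simp only [Set.mem_iUnion]
    rintro x ⟨w, hx⟩ y ⟨w', hy⟩ hxy
    obtain rfl : w = w' := by rw [← hπ w x hx, hxy, hπ w' y hy]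
    exact reachable_iSup_spanningCoe_induce hconn hx hy
  have hK : MacLane (L ⊔ fromEdgeSet (g '' H.edgeSet)) := hG.mono <|
    sup_le (iSup_le fun w => spanningCoe_induce_le _ _) <|
      G.fromEdgeSet_le.mpr (Set.sdiff_subset.trans (Set.image_subset_iff.mpr hgG))
  refine hK.of_contraction le_sup_left hL hreach (g := g) ?_ hgU hgπ ?_
  · intro e he
    rw [edgeSet_sup, edgeSet_fromEdgeSet]
    exact Or.inr ⟨Set.mem_image_of_mem g he, G.not_isDiag_of_mem_edgeSet (hgG e he)⟩
  · intro e he hdiag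
    rw [edgeSet_sup, edgeSet_fromEdgeSet] at he
    refine he.elim (fun heL => (hdiag ?_).elim) (·.1)
    induction e with | h x y => exact hL x y heL

end Contraction

section EdgeBound

variable {V : Type*} {G : SimpleGraph V} {z : Chain V}

lemma boundary_mem_supported {S : Set V} (h : ∀ e ∈ z.support, ∀ x ∈ e, x ∈ S) :
    boundary z ∈ Finsupp.supported (ZMod 2) (ZMod 2) S := by
  rw [boundary, Finsupp.linearCombination_apply]
  refine sum_mem fun e he => Submodule.smul_mem _ _ ?_
  simpa [boundary] using boundary_single_mem_supported (h e he)

lemma exists_ne_of_apply_ne_zero (hz : z ∈ cycleSpace G) {x y : V} (hxy : z s(x, y) ≠ 0) :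
    ∃ w ≠ y, z s(x, w) ≠ 0 := by
  by_contra! hw
  have hne : x ≠ y := G.ne_of_adj (hz.2 (Finsupp.mem_support_iff.mpr hxy))
  have z_xy : z s(x, y) = 1 := by
    generalize z s(x, y) = a at hxy
    decide +revert
  have off_x : ∀ e ∈ (z + Finsupp.single s(x, y) 1).support, ∀ v ∈ e, v ∈ ({x}ᶜ : Set V) := by
    rintro e he v hv rfl
    obtain ⟨w, rfl⟩ := Sym2.mem_iff_exists.mp hv
    rw [Finsupp.mem_support_iff, Finsupp.add_apply] at he
    by_cases hwy : w = y
    · subst hwy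
      rw [z_xy, Finsupp.single_eq_same] at he
      exact he rfl
    · refine he ?_
      rw [hw w hwy, Finsupp.single_eq_of_ne, add_zero]
      simpa using ⟨hwy, fun h h' => hwy (h'.trans h)⟩
  have key : (Finsupp.single x 1 + Finsupp.single y 1 : V →₀ ZMod 2) x = 0 := by
    rw [← boundary_single, ← zero_add (boundary _), ← LinearMap.mem_ker.mp hz.1, ← map_add]
    exact Finsupp.mem_supported' _ _ |>.mp (boundary_mem_supported off_x) x (by simp)
  simp [hne.symm] at key

lemma four_le_card_support (hG : G.CliqueFree 3) (hz : z ∈ cycleSpace G) (hz0 : z ≠ 0) :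
    4 ≤ z.support.card := by
  classical
  have adj {x y : V} (h : z s(x, y) ≠ 0) : G.Adj x y := hz.2 (Finsupp.mem_support_iff.mpr h)
  have no_triangle {x y w : V} (hxy : G.Adj x y) (hyw : G.Adj y w) (hxw : G.Adj x w) : False :=
    hG {x, y, w} (is3Clique_triple_iff.mpr ⟨hxy, hxw, hyw⟩)
  obtain ⟨⟨x, y⟩, hxy⟩ := Finsupp.ne_iff.mp hz0
  change z s(x, y) ≠ 0 at hxy
  obtain ⟨w, hwx, hyw⟩ := exists_ne_of_apply_ne_zero hz (Sym2.eq_swap ▸ hxy)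
  obtain ⟨u, huy, hxu⟩ := exists_ne_of_apply_ne_zero hz hxy
  obtain ⟨v, hvy, hwv⟩ := exists_ne_of_apply_ne_zero hz (Sym2.eq_swap ▸ hyw)
  have hvx : v ≠ x := by
    rintro rfl
    exact no_triangle (adj hxy) (adj hyw) (adj hwv).symm
  have hxy' := (adj hxy).ne
  have hyw' := (adj hyw).ne
  have card_four : ({s(x, y), s(y, w), s(x, u), s(w, v)} : Finset (Sym2 V)).card = 4 := by
    repeat rw [Finset.card_insert_of_notMem]
    · rfl
    all_goals simp only [Finset.mem_insert, Finset.mem_singleton, Sym2.eq_iff]; grind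
  rw [← card_four]
  refine Finset.card_le_card fun e he => ?_
  simp only [Finset.mem_insert, Finset.mem_singleton] at he
  rw [Finsupp.mem_support_iff]
  rcases he with rfl | rfl | rfl | rfl <;> assumption

lemma finrank_range_boundary_lt [Finite V] [Nonempty V] :
    Module.finrank (ZMod 2) (LinearMap.range (boundary (V := V))) < Nat.card V := by
  have := Fintype.ofFinite V
  let sum : (V →₀ ZMod 2) →ₗ[ZMod 2] ZMod 2 := Finsupp.linearCombination (ZMod 2) fun _ => 1
  have range_le : LinearMap.range (boundary (V := V)) ≤ LinearMap.ker sum := by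
    rw [LinearMap.range_le_ker_iff]
    refine Finsupp.lhom_ext' fun e => LinearMap.ext_ring ?_
    induction e with | h x y => simp [sum, ZModModule.add_self]
  have ne_top : LinearMap.ker sum ≠ ⊤ := fun h => by
    have : Finsupp.single (Classical.arbitrary V) 1 ∈ LinearMap.ker sum := h ▸ Submodule.mem_top
    simp [sum] at this
  calc _ ≤ _ := Submodule.finrank_mono range_le
    _ < Module.finrank (ZMod 2) (V →₀ ZMod 2) := Submodule.finrank_lt ne_top
    _ = Nat.card V := by rw [Module.finrank_finsupp_self, Nat.card_eq_fintype_card]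

lemma ncard_edgeSet_lt_finrank_cycleSpace_add [Finite V] [Nonempty V] (G : SimpleGraph V) :
    G.edgeSet.ncard < Module.finrank (ZMod 2) (cycleSpace G) + Nat.card V := by
  have := Fintype.ofFinite G.edgeSet
  let E := Finsupp.supported (ZMod 2) (ZMod 2) G.edgeSet
  have finrank_E : Module.finrank (ZMod 2) E = G.edgeSet.ncard := by
    rw [(Finsupp.supportedEquivFinsupp G.edgeSet).finrank_eq, Module.finrank_finsupp_self,
      Set.ncard_eq_toFinset_card', Set.toFinset_card]
  have finrank_ker : Module.finrank (ZMod 2) (LinearMap.ker (boundary.domRestrict E)) =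
      Module.finrank (ZMod 2) (cycleSpace G) := by
    rw [LinearMap.ker_domRestrict, cycleSpace, inf_comm, ← Submodule.map_comap_subtype,
      Submodule.finrank_map_subtype_eq]
  have range_le : LinearMap.range (boundary.domRestrict E) ≤ LinearMap.range boundary := by
    rw [LinearMap.range_domRestrict]
    exact LinearMap.map_le_range
  have rank_nullity : Module.finrank (ZMod 2) (LinearMap.range (boundary.domRestrict E)) +
      Module.finrank (ZMod 2) (LinearMap.ker (boundary.domRestrict E)) =
        Module.finrank (ZMod 2) E :=
    LinearMap.finrank_range_add_finrank_ker (V := E) (V₂ := V →₀ ZMod 2) _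
  have := Submodule.finrank_mono range_le
  have := finrank_range_boundary_lt (V := V)
  omega

lemma TwoSparse.two_mul_card_le [Finite V] {C : Finset (Chain V)} (hC : TwoSparse C)
    (hG : G.CliqueFree 3) (hCG : (C : Set (Chain V)) ⊆ cycleSpace G) (h0 : 0 ∉ C) :
    2 * C.card ≤ G.edgeSet.ncard := by
  classical
  have := Fintype.ofFinite G.edgeSet
  have double_count : C.card * 4 ≤ G.edgeFinset.card * 2 := by
    refine Finset.card_mul_le_card_mul (fun (z : Chain V) e => z e ≠ 0) (fun z hz => ?_)
      fun e _ => hC e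
    refine (four_le_card_support hG (hCG hz) (ne_of_mem_of_not_mem hz h0)).trans
      (Finset.card_le_card fun e he => ?_)
    exact Finset.mem_filter.mpr
      ⟨mem_edgeFinset.mpr ((hCG hz).2 he), Finsupp.mem_support_iff.mp he⟩
  rw [Set.ncard_eq_toFinset_card']
  change 2 * C.card ≤ G.edgeFinset.card
  omega

theorem MacLane.ncard_edgeSet_add_two_le [Finite V] [Nonempty V] (hM : MacLane G)
    (hG : G.CliqueFree 3) : G.edgeSet.ncard + 2 ≤ 2 * Nat.card V := by
  classical
  obtain ⟨F, hF⟩ := IsNoetherian.noetherian (cycleSpace G)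
  obtain ⟨C, hC, hCG, hFC⟩ := hM F (hF ▸ Submodule.subset_span)
  have finrank_le : Module.finrank (ZMod 2) (cycleSpace G) ≤ (C.erase 0).card := by
    refine (Submodule.finrank_mono ?_).trans (finrank_span_finset_le_card (C.erase 0))
    rw [Finset.coe_erase, Submodule.span_sdiff_singleton_zero, ← hF]
    exact Submodule.span_le.mpr hFC
  have card_le := TwoSparse.two_mul_card_le (C := C.erase 0)
    (fun e => (Finset.card_le_card (Finset.filter_subset_filter _ (C.erase_subset 0))).trans (hC e))
    hG ((Finset.coe_subset.mpr (C.erase_subset 0)).trans hCG) (C.notMem_erase 0)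
  have := ncard_edgeSet_lt_finrank_cycleSpace_add G
  omega

end EdgeBound

section Arms

variable {V X : Type*} {G : SimpleGraph V} {Γ : SimpleGraph X} {R : Set X} {r x y : X}

/-- The part of `R` that can be reached from `r` without leaving `R`. -/
def componentIn (Γ : SimpleGraph X) (R : Set X) (r : X) : Set X :=
  ⋃₀ {S | r ∈ S ∧ S ⊆ R ∧ (Γ.induce S).Connected}

lemma componentIn_subset : componentIn Γ R r ⊆ R :=
  Set.sUnion_subset fun _ hS => hS.2.1

lemma subset_componentIn {S : Set X} (hr : r ∈ S) (hSR : S ⊆ R)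
    (hS : (Γ.induce S).Connected) : S ⊆ componentIn Γ R r :=
  Set.subset_sUnion_of_mem (⟨hr, hSR, hS⟩ : _ ∧ _ ∧ _)

lemma mem_componentIn_self (hr : r ∈ R) : r ∈ componentIn Γ R r :=
  subset_componentIn (Set.mem_singleton r) (Set.singleton_subset_iff.mpr hr) ⟨.of_subsingleton⟩ rfl

lemma mem_componentIn_of_adj (hx : x ∈ componentIn Γ R r) (hy : y ∈ R) (hxy : Γ.Adj x y) :
    y ∈ componentIn Γ R r := by
  obtain ⟨S, ⟨hr, hSR, hS⟩, hxS⟩ := hx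
  refine subset_componentIn (S := S ∪ {x, y}) (Or.inl hr) (Set.union_subset hSR ?_)
    (induce_union_connected hS.preconnected (induce_pair_connected_of_adj hxy).preconnected
      ⟨x, hxS, Set.mem_insert x {y}⟩) (by simp)
  exact Set.insert_subset (hSR hxS) (Set.singleton_subset_iff.mpr hy)

lemma connected_induce_componentIn (hr : r ∈ R) : (Γ.induce (componentIn Γ R r)).Connected :=
  induce_sUnion_connected_of_pairwise_not_disjoint
    ⟨{r}, rfl, Set.singleton_subset_iff.mpr hr, ⟨.of_subsingleton⟩⟩
    (fun hS hT => ⟨r, hS.1, hT.1⟩) fun hS => hS.2.2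

lemma exists_adj_componentIn_of_notMem {S : Set X} (hrR : r ∈ R) (hrS : r ∈ S)
    (hS : (Γ.induce S).Connected) (hxS : x ∈ S) (hx : x ∉ componentIn Γ R r) :
    ∃ y ∈ componentIn Γ R r, ∃ z ∈ S, z ∉ R ∧ Γ.Adj y z := by
  obtain ⟨p⟩ := hS.preconnected ⟨r, hrS⟩ ⟨x, hxS⟩
  obtain ⟨⟨⟨y, z⟩, hyz⟩, -, hy, hz⟩ :=
    p.exists_boundary_dart (Subtype.val ⁻¹' componentIn Γ R r) (mem_componentIn_self hrR) hx
  exact ⟨y, hy, z, z.2, fun hzR => hz (mem_componentIn_of_adj hy hzR hyz), hyz⟩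

/-- Half edges that only meet at a common root or as the two halves of an edge contract to the
vertices. Overlaps are resolved by giving each point to the largest root claiming it, and
discarding what this cuts off from its own root. -/
lemma MacLane.of_arms (hΓ : MacLane Γ) (root : V → X) (A : V → V → Set X)
    (hroot : ∀ u v, root u ∈ A u v) (hconn : ∀ u v, (Γ.induce (A u v)).Connected)
    (hmeet : ∀ u v, G.Adj u v → (A u v ∩ A v u).Nonempty)
    (hdisj : ∀ u v u' v', u ≠ u' → s(u, v) ≠ s(u', v') → Disjoint (A u v) (A u' v')) :
    MacLane G := by
  let := IsWellOrder.linearOrder (WellOrderingRel (α := V))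
  have eq_of_mem {u v u' v' : V} {x : X} (hu : u ≠ u') (hx : x ∈ A u v) (hx' : x ∈ A u' v') :
      u = v' ∧ v = u' := by
    have := not_imp_comm.mp (hdisj u v u' v' hu) (Set.not_disjoint_iff.mpr ⟨x, hx, hx'⟩)
    exact (Sym2.eq_iff.mp this).resolve_left fun h => hu h.1
  let R (v : V) : Set X := {x | (∃ z, x ∈ A v z) ∧ ∀ w > v, ∀ z, x ∉ A w z}
  let U (v : V) : Set X := componentIn Γ (R v) (root v)
  have root_mem (v : V) : root v ∈ R v := by
    refine ⟨⟨v, hroot v v⟩, fun w hw z hx => hw.ne ?_⟩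
    exact (eq_of_mem hw.ne (hroot v v) hx).2
  have disjoint_of_lt {u v : V} (h : u < v) : Disjoint (U u) (U v) :=
    Set.disjoint_left.mpr fun x hu hv => by
      obtain ⟨z, hz⟩ := (componentIn_subset hv).1
      exact (componentIn_subset hu).2 v h z hz
  have adj_of_lt {u v : V} (huv : u < v) (h : G.Adj u v) : ∃ x ∈ U u, ∃ y ∈ U v, Γ.Adj x y := by
    have arm_subset : A v u ⊆ U v := by
      refine subset_componentIn (hroot v u) (fun x hx => ⟨⟨u, hx⟩, fun w hw z hz => ?_⟩)
        (hconn v u)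
      exact (huv.trans hw).ne (eq_of_mem hw.ne hx hz).2
    obtain ⟨m, hm, hm'⟩ := hmeet u v h
    have hmU : m ∉ U u := fun hmU => (componentIn_subset hmU).2 v huv u hm'
    obtain ⟨x, hx, y, hy, hyR, hxy⟩ :=
      exists_adj_componentIn_of_notMem (root_mem u) (hroot u v) (hconn u v) hm hmU
    refine ⟨x, hx, y, arm_subset ?_, hxy⟩
    obtain ⟨w, hw, z, hz⟩ : ∃ w > u, ∃ z, y ∈ A w z := by
      by_contra! hA
      exact hyR ⟨⟨v, hy⟩, hA⟩
    obtain ⟨rfl, rfl⟩ := eq_of_mem hw.ne hy hz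
    exact hz
  refine hΓ.of_branchSets (U := U) (fun u v huv => ?_)
    (fun v => connected_induce_componentIn (root_mem v)) fun u v h => ?_
  · exact huv.lt_or_gt.elim disjoint_of_lt fun h => (disjoint_of_lt h).symm
  · rcases h.ne.lt_or_gt with huv | hvu
    · exact adj_of_lt huv h
    · obtain ⟨x, hx, y, hy, hxy⟩ := adj_of_lt hvu h.symm
      exact ⟨y, hy, x, hx, hxy.symm⟩

end Arms

section Discretization

open scoped Topology

variable {h : ℝ} {S : Set (ℝ × ℝ)} {s : ℝ × ℝ} {x y : ℕ × ℕ}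

/-- The points of the square grid of mesh `h` at distance less than `h` from `S`. -/
def cells (h : ℝ) (S : Set (ℝ × ℝ)) : Set (ℕ × ℕ) :=
  (fun x => (h * x.1, h * x.2)) ⁻¹' Metric.thickening h S

lemma mem_cells_singleton : x ∈ cells h {s} ↔ |h * x.1 - s.1| < h ∧ |h * x.2 - s.2| < h := by
  rw [cells, Set.mem_preimage, Metric.thickening_singleton, Metric.mem_ball, Prod.dist_eq,
    max_lt_iff, Real.dist_eq, Real.dist_eq]

lemma cells_singleton_subset (hs : s ∈ S) : cells h {s} ⊆ cells h S :=
  Set.preimage_mono (Metric.thickening_subset_of_subset h (Set.singleton_subset_iff.mpr hs))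

lemma floor_mem_cells (hh : 0 < h) (hs : 0 ≤ s) : (⌊s.1 / h⌋₊, ⌊s.2 / h⌋₊) ∈ cells h {s} := by
  have coord {a : ℝ} (ha : 0 ≤ a) : |h * ⌊a / h⌋₊ - a| < h := by
    have floor_le := Nat.floor_le (div_nonneg ha hh.le)
    have lt_floor := Nat.lt_floor_add_one (a / h)
    rw [le_div_iff₀ hh] at floor_le
    rw [div_lt_iff₀ hh] at lt_floor
    rw [abs_lt]
    constructor <;> linarith
  exact mem_cells_singleton.mpr ⟨coord hs.1, coord hs.2⟩

lemma reachable_of_mem_cells_singleton (hs : s ∈ S) (hx : x ∈ cells h {s})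
    (hy : y ∈ cells h {s}) :
    (grid.induce (cells h S)).Reachable ⟨x, cells_singleton_subset hs hx⟩
      ⟨y, cells_singleton_subset hs hy⟩ := by
  have close {i j : ℕ} {a : ℝ} (hi : |h * i - a| < h) (hj : |h * j - a| < h) : i ≤ j + 1 := by
    by_contra! hij
    have hij' : (j : ℝ) + 2 ≤ i := mod_cast hij
    have hh : 0 < h := (abs_nonneg _).trans_lt hi
    have := mul_le_mul_of_nonneg_left hij' hh.le
    rw [abs_lt] at hi hj
    linarith
  have step {x y : cells h S} (hxy : x.1 = y.1 ∨ grid.Adj x.1 y.1) :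
      (grid.induce (cells h S)).Reachable x y :=
    hxy.elim (fun h => Subtype.ext h ▸ .refl _) fun h => Adj.reachable h
  rw [mem_cells_singleton] at hx hy
  obtain ⟨i, j⟩ := x
  obtain ⟨i', j'⟩ := y
  have hmid : (i', j) ∈ cells h {s} := mem_cells_singleton.mpr ⟨hy.1, hx.2⟩
  refine (step (y := ⟨(i', j), cells_singleton_subset hs hmid⟩) ?_).trans (step ?_)
  · have : i ≤ i' + 1 := close hx.1 hy.1
    have : i' ≤ i + 1 := close hy.1 hx.1
    rcases (by omega : i = i' ∨ i + 1 = i' ∨ i' + 1 = i) with rfl | rfl | rfl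
    exacts [.inl rfl, .inr (grid_adj_succ_left _ _), .inr (grid_adj_succ_left _ _).symm]
  · have : j ≤ j' + 1 := close hx.2 hy.2
    have : j' ≤ j + 1 := close hy.2 hx.2
    rcases (by omega : j = j' ∨ j + 1 = j' ∨ j' + 1 = j) with rfl | rfl | rfl
    exacts [.inl rfl, .inr (grid_adj_succ_right _ _), .inr (grid_adj_succ_right _ _).symm]

lemma connected_induce_cells (hh : 0 < h) (hS : IsPreconnected S) (hne : S.Nonempty)
    (hpos : ∀ s ∈ S, 0 ≤ s) : (grid.induce (cells h S)).Connected := by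
  let P (s t : ℝ × ℝ) : Prop := ∀ x y : cells h S, x.1 ∈ cells h {s} → y.1 ∈ cells h {t} →
    (grid.induce (cells h S)).Reachable x y
  have all_P {s t : ℝ × ℝ} (hs : s ∈ S) (ht : t ∈ S) : P s t := by
    refine hS.induction₂ P (fun s hs => ?_) (fun s t r _ ht _ hst htr x y hx hy => ?_)
      (fun s t _ _ hst x y hx hy => (hst y x hy hx).symm) hs ht
    · have floor_mem := floor_mem_cells hh (hpos s hs)
      filter_upwards [nhdsWithin_le_nhds (Metric.isOpen_ball.mem_nhds
        (Metric.mem_ball'.mpr (Metric.mem_ball.mp (by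
          rwa [cells, Metric.thickening_singleton] at floor_mem)))), self_mem_nhdsWithin]
        with t ht htS x y hx hy
      have floor_mem' : (⌊s.1 / h⌋₊, ⌊s.2 / h⌋₊) ∈ cells h {t} := by
        rw [cells, Set.mem_preimage, Metric.thickening_singleton]
        exact Metric.mem_ball'.mpr ht
      exact (reachable_of_mem_cells_singleton hs hx floor_mem).trans
        (reachable_of_mem_cells_singleton htS floor_mem' hy)
    · have floor_mem := floor_mem_cells hh (hpos t ht)
      exact (hst x ⟨_, cells_singleton_subset ht floor_mem⟩ hx floor_mem).trans
        (htr ⟨_, cells_singleton_subset ht floor_mem⟩ y floor_mem hy)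
  have exists_mem (x : cells h S) : ∃ s ∈ S, x.1 ∈ cells h {s} := by
    obtain ⟨s, hs, hx⟩ := Metric.mem_thickening_iff.mp x.2
    exact ⟨s, hs, Metric.mem_thickening_iff.mpr ⟨s, rfl, hx⟩⟩
  obtain ⟨s, hs⟩ := hne
  have : Nonempty (cells h S) :=
    ⟨_, cells_singleton_subset hs (floor_mem_cells hh (hpos s hs))⟩
  refine ⟨fun x y => ?_⟩
  obtain ⟨s, hs, hxs⟩ := exists_mem x
  obtain ⟨t, ht, hyt⟩ := exists_mem y
  exact all_P hs ht x y hxs hyt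

lemma exists_pos_forall_disjoint_cells {ι : Type*} [Finite ι] {A B : ι → Set (ℝ × ℝ)}
    (hA : ∀ i, IsCompact (A i)) (hB : ∀ i, IsCompact (B i)) (hAB : ∀ i, Disjoint (A i) (B i)) :
    ∃ h > 0, ∀ i, Disjoint (cells h (A i)) (cells h (B i)) := by
  have eventually_disjoint (i : ι) :
      ∀ᶠ h in 𝓝[>] (0 : ℝ), Disjoint (cells h (A i)) (cells h (B i)) := by
    obtain ⟨δ, hδ, hdisj⟩ := (hAB i).exists_thickenings (hA i) (hB i).isClosed
    filter_upwards [Ioo_mem_nhdsGT hδ] with h hh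
    exact Disjoint.preimage _ <| hdisj.mono
      (Metric.thickening_mono hh.2.le _) (Metric.thickening_mono hh.2.le _)
  obtain ⟨h, hdisj, hh⟩ :=
    ((Filter.eventually_all.mpr eventually_disjoint).and self_mem_nhdsWithin).exists
  exact ⟨h, hh, hdisj⟩

end Discretization

section Drawing

variable {V : Type*} {G : SimpleGraph V}

/-- Cutting an arc at its midpoint leaves an arm at each of its ends. -/
lemma exists_arm_of_arc {γ : Set.Icc (0 : ℝ) 1 → ℝ × ℝ} (hγ : Continuous γ) {P : Set (ℝ × ℝ)}
    (hP : ∀ t : Set.Icc (0 : ℝ) 1, (t : ℝ) ≠ 0 → (t : ℝ) ≠ 1 → γ t ∉ P) {p : ℝ × ℝ}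
    (hp : p = γ 0 ∨ p = γ 1) :
    ∃ A, IsCompact A ∧ IsPreconnected A ∧ p ∈ A ∧ A ∩ P ⊆ {p} ∧ A ⊆ Set.range γ ∧
      γ ⟨1 / 2, by norm_num, by norm_num⟩ ∈ A := by
  let mid : Set.Icc (0 : ℝ) 1 := ⟨1 / 2, by norm_num, by norm_num⟩
  have image_inter_subset {I : Set (Set.Icc (0 : ℝ) 1)}
      (hI : ∀ t ∈ I, t = 0 ∨ t = 1 → γ t = p) : γ '' I ∩ P ⊆ {p} := by
    rintro _ ⟨⟨t, ht, rfl⟩, hv⟩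
    by_contra hne
    exact hP t (fun h => hne (hI t ht (.inl (Subtype.ext h))))
      (fun h => hne (hI t ht (.inr (Subtype.ext h)))) hv
  rcases hp with rfl | rfl
  · refine ⟨γ '' Set.Iic mid, isClosed_Iic.isCompact.image hγ,
      isPreconnected_Iic.image _ hγ.continuousOn, ⟨0, unitInterval.nonneg', rfl⟩,
      image_inter_subset ?_, Set.image_subset_range _ _, ⟨mid, by simp, rfl⟩⟩
    rintro _ ht (rfl | rfl)
    exacts [rfl, absurd (show (1 : ℝ) ≤ 1 / 2 from ht) (by norm_num)]
  · refine ⟨γ '' Set.Ici mid, isClosed_Ici.isCompact.image hγ,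
      isPreconnected_Ici.image _ hγ.continuousOn, ⟨1, unitInterval.le_one', rfl⟩,
      image_inter_subset ?_, Set.image_subset_range _ _, ⟨mid, by simp, rfl⟩⟩
    rintro _ ht (rfl | rfl)
    exacts [absurd (show (1 / 2 : ℝ) ≤ 0 from ht) (by norm_num), rfl]

lemma IsPlanar.exists_arms (hG : IsPlanar G) :
    ∃ (f : V → ℝ × ℝ) (A : V → V → Set (ℝ × ℝ)), (∀ u v, IsCompact (A u v)) ∧
      (∀ u v, IsPreconnected (A u v)) ∧ (∀ u v, f u ∈ A u v) ∧
      (∀ u v, G.Adj u v → (A u v ∩ A v u).Nonempty) ∧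
      ∀ u v u' v', u ≠ u' → s(u, v) ≠ s(u', v') → Disjoint (A u v) (A u' v') := by
  obtain ⟨f, γ, hf, hγ, hends, -, havoid, hmeet⟩ := hG
  have exists_arm (u v : V) : ∃ A, IsCompact A ∧ IsPreconnected A ∧ f u ∈ A ∧
      A ∩ Set.range f ⊆ {f u} ∧ (A ⊆ Set.range f ∨ ∃ h, A ⊆ Set.range (γ ⟨s(u, v), h⟩)) ∧
        ∀ h, γ ⟨s(u, v), h⟩ ⟨1 / 2, by norm_num, by norm_num⟩ ∈ A := by
    by_cases h : s(u, v) ∈ G.edgeSet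
    · obtain ⟨x, y, (hxy : s(u, v) = s(x, y)), h0, h1⟩ := hends ⟨s(u, v), h⟩
      obtain ⟨A, hA, hA', hu, hinter, hrange, hmid⟩ := exists_arm_of_arc (p := f u)
        (P := Set.range f) (hγ ⟨s(u, v), h⟩) (fun t h0 h1 ⟨v, hv⟩ => havoid _ t h0 h1 v hv.symm) (by
          rcases Sym2.mem_iff.mp (hxy ▸ Sym2.mem_mk_left u v) with rfl | rfl
          exacts [.inl h0.symm, .inr h1.symm])
      exact ⟨A, hA, hA', hu, hinter, .inr ⟨h, hrange⟩, fun _ => hmid⟩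
    · exact ⟨{f u}, isCompact_singleton, isPreconnected_singleton, rfl, Set.inter_subset_left,
        .inl (by simp), fun h' => absurd h' h⟩
  choose A hA hA' hu hinter hrange hmid using exists_arm
  refine ⟨f, A, hA, hA', hu, fun u v h => ?_, fun u v u' v' hne hne' => ?_⟩
  · refine ⟨_, hmid u v h, ?_⟩
    have := hmid v u h.symm
    simpa only [Sym2.eq_swap] using this
  · refine Set.disjoint_left.mpr fun p hp hp' => hne (hf ?_)
    suffices p ∈ Set.range f from (hinter u v ⟨hp, this⟩).symm.trans (hinter u' v' ⟨hp', this⟩)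
    rcases hrange u v with h | ⟨h, hγuv⟩
    · exact h hp
    rcases hrange u' v' with h' | ⟨h', hγuv'⟩
    · exact h' hp'
    obtain ⟨s, rfl⟩ := hγuv hp
    obtain ⟨t, ht⟩ := hγuv' hp'
    exact hmeet _ _ (fun h => hne' (congrArg Subtype.val h)) s t ht.symm

theorem IsPlanar.macLane [Finite V] (hG : IsPlanar G) : MacLane G := by
  obtain ⟨f, A, hA, hA', hfA, hmeet, hdisj⟩ := hG.exists_arms
  -- Exponential coordinates move the drawing into the quadrant of the grid.
  let φ : ℝ × ℝ → ℝ × ℝ := Prod.map Real.exp Real.exp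
  have hφ : Continuous φ := Real.continuous_exp.prodMap Real.continuous_exp
  have φ_injective : φ.Injective := Real.exp_injective.prodMap Real.exp_injective
  have φ_nonneg (p : ℝ × ℝ) : 0 ≤ φ p := ⟨(Real.exp_pos _).le, (Real.exp_pos _).le⟩
  obtain ⟨h, hh, hcells⟩ := exists_pos_forall_disjoint_cells
    (ι := {i : (V × V) × V × V // i.1.1 ≠ i.2.1 ∧ s(i.1.1, i.1.2) ≠ s(i.2.1, i.2.2)})
    (A := fun i => φ '' A i.1.1.1 i.1.1.2) (B := fun i => φ '' A i.1.2.1 i.1.2.2)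
    (fun i => (hA _ _).image hφ) (fun i => (hA _ _).image hφ)
    fun i => (hdisj _ _ _ _ i.2.1 i.2.2).image φ_injective.injOn (Set.subset_univ _)
      (Set.subset_univ _)
  have floor_mem {p : ℝ × ℝ} {S : Set (ℝ × ℝ)} (hp : p ∈ S) :
      (⌊(φ p).1 / h⌋₊, ⌊(φ p).2 / h⌋₊) ∈ cells h (φ '' S) :=
    cells_singleton_subset (Set.mem_image_of_mem φ hp) (floor_mem_cells hh (φ_nonneg p))
  refine macLane_grid.of_arms _ (fun u v => cells h (φ '' A u v))
    (fun u v => floor_mem (hfA u v)) (fun u v => ?_) (fun u v huv => ?_)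
    fun u v u' v' hne hne' => hcells ⟨((u, v), u', v'), hne, hne'⟩
  · exact connected_induce_cells hh ((hA' u v).image φ hφ.continuousOn)
      ⟨_, Set.mem_image_of_mem φ (hfA u v)⟩ (Set.forall_mem_image.mpr fun p _ => φ_nonneg p)
  · obtain ⟨p, hp, hp'⟩ := hmeet u v huv
    exact ⟨_, floor_mem hp, floor_mem hp'⟩

theorem IsPlanar.ncard_edgeSet_add_two_le [Finite V] [Nonempty V] (hG : IsPlanar G)
    (hfree : G.CliqueFree 3) : G.edgeSet.ncard + 2 ≤ 2 * Nat.card V :=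
  hG.macLane.ncard_edgeSet_add_two_le hfree

end Drawing

section PlanarUnions

variable {V W : Type*} {G : SimpleGraph V} {H : SimpleGraph W} {k : ℕ}

lemma IsPlanar.of_copy (hH : IsPlanar H) (φ : Copy G H) : IsPlanar G := by
  obtain ⟨f, γ, hf, hγ, hends, hinj, havoid, hmeet⟩ := hH
  let g (e : G.edgeSet) : H.edgeSet := φ.toHom.mapEdgeSet e
  have hg : g.Injective := Hom.mapEdgeSet.injective φ.toHom φ.injective
  have ends (e : G.edgeSet) : ∃ u v, (e : Sym2 V) = s(u, v) ∧
      γ (g e) 0 = f (φ u) ∧ γ (g e) 1 = f (φ v) := by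
    obtain ⟨u', v', he, h0, h1⟩ := hends (g e)
    obtain ⟨⟨u, v⟩, huv⟩ := e
    rcases Sym2.eq_iff.mp (show s(φ u, φ v) = s(u', v') from he) with ⟨rfl, rfl⟩ | ⟨rfl, rfl⟩
    exacts [⟨u, v, rfl, h0, h1⟩, ⟨v, u, Sym2.eq_swap, h0, h1⟩]
  refine ⟨f ∘ φ, γ ∘ g, hf.comp φ.injective, fun e => hγ _, ends, fun e => hinj _,
    fun e t h0 h1 v => havoid _ t h0 h1 _, fun e e' hne s t hst => ?_⟩
  obtain ⟨w, hw⟩ := hmeet _ _ (hg.ne hne) s t hst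
  obtain ⟨u, v, -, h0, h1⟩ := ends e
  by_cases hs0 : s = 0
  · exact ⟨u, by rw [hs0]; exact h0.symm⟩
  by_cases hs1 : s = 1
  · exact ⟨v, by rw [hs1]; exact h1.symm⟩
  exact absurd hw.symm
    (havoid _ s (fun h => hs0 (Subtype.ext h)) (fun h => hs1 (Subtype.ext h)) w)

/-- `G` is the union of `k` planar subgraphs, so that `thickness G` is the least such `k`. -/
def IsUnionOfPlanar (G : SimpleGraph V) (k : ℕ) : Prop :=
  ∃ H : Fin k → SimpleGraph V, (∀ i, H i ≤ G) ∧ (∀ i, IsPlanar (H i)) ∧ (⨆ i, H i) = G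

lemma isUnionOfPlanar_of_cover {H : Fin k → SimpleGraph W} (hH : ∀ i, IsPlanar (H i))
    (φ : V ↪ W) (hφ : ∀ u v, G.Adj u v → ∃ i, (H i).Adj (φ u) (φ v)) : IsUnionOfPlanar G k := by
  refine ⟨fun i => G ⊓ (H i).comap φ, fun i => inf_le_left, fun i => (hH i).of_copy
    ⟨⟨φ, And.right⟩, φ.injective⟩, le_antisymm (iSup_le fun i => inf_le_left) fun u v huv => ?_⟩
  obtain ⟨i, hi⟩ := hφ u v huv
  exact iSup_adj.mpr ⟨i, huv, hi⟩

lemma IsUnionOfPlanar.of_copy (hH : IsUnionOfPlanar H k) (φ : Copy G H) :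
    IsUnionOfPlanar G k := by
  obtain ⟨L, -, hL, rfl⟩ := hH
  exact isUnionOfPlanar_of_cover hL φ.toEmbedding fun u v huv => iSup_adj.mp (φ.toHom.map_adj huv)

lemma IsUnionOfPlanar.ncard_edgeSet_add_le [Finite V] [Nonempty V] (hG : IsUnionOfPlanar G k)
    (hfree : G.CliqueFree 3) : G.edgeSet.ncard + 2 * k ≤ k * (2 * Nat.card V) := by
  obtain ⟨H, hHG, hH, rfl⟩ := hG
  calc (⨆ i, H i).edgeSet.ncard + 2 * k ≤ ∑ i, ((H i).edgeSet.ncard + 2) := by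
        rw [edgeSet_iSup, Finset.sum_add_distrib]
        simpa [mul_comm] using Set.ncard_iUnion_le_of_fintype fun i => (H i).edgeSet
    _ ≤ ∑ _i : Fin k, 2 * Nat.card V :=
        Finset.sum_le_sum fun i _ => (hH i).ncard_edgeSet_add_two_le (hfree.anti (hHG i))
    _ = k * (2 * Nat.card V) := by simp

lemma IsUnionOfPlanar.lt_four_mul {n : ℕ} (hn : 1 ≤ n)
    (h : IsUnionOfPlanar (completeBipartiteGraph (Fin n) (Fin n)) k) : n < 4 * k := by
  have : NeZero n := ⟨by omega⟩
  have ncard_edgeSet : (completeBipartiteGraph (Fin n) (Fin n)).edgeSet.ncard = n * n := by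
    rw [Set.ncard, encard_edgeSet_completeBipartiteGraph]
    simp
  have hfree : (completeBipartiteGraph (Fin n) (Fin n)).CliqueFree 3 :=
    (CompleteBipartiteGraph.bicoloring (Fin n) (Fin n)).colorable.cliqueFree (by simp)
  have card_le := h.ncard_edgeSet_add_le hfree
  rw [ncard_edgeSet, Nat.card_sum, Nat.card_fin] at card_le
  by_contra! hk
  nlinarith

end PlanarUnions
section TwoPageDrawings

variable {V α : Type*} {G : SimpleGraph V}

/-- The point above or below `x`, according to the sign `s`, on the parabolic arch that joins
`(a, 0)` to `(b, 0)`. Arches of one sign make up one page of a two-page drawing. -/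
def archPoint (s : ℤˣ) (a b x : ℝ) : ℝ × ℝ :=
  (x, ((s : ℤ) : ℝ) * ((x - a) * (b - x)))

lemma interlaced_of_mul_eq_mul {a b c d x : ℝ} (hax : a < x) (hxb : x < b) (hcx : c < x)
    (h : (x - a) * (b - x) = (x - c) * (d - x)) :
    (a = c ∧ b = d) ∨ (a < c ∧ b < d) ∨ (c < a ∧ d < b) := by
  rcases lt_trichotomy a c with hac | rfl | hca
  · exact .inr (.inl ⟨hac, by nlinarith⟩)
  · exact .inl ⟨rfl, sub_left_injective (mul_left_cancel₀ (sub_pos.mpr hax).ne' h)⟩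
  · exact .inr (.inr ⟨hca, by nlinarith⟩)

lemma interlaced_of_archPoint_eq {s t : ℤˣ} {a b c d x y : ℝ} (hx : x ∈ Set.Ioo a b)
    (hy : y ∈ Set.Icc c d) (h : archPoint s a b x = archPoint t c d y) :
    s = t ∧ ((a = c ∧ b = d) ∨ (a < c ∧ c < b ∧ b < d) ∨ (c < a ∧ a < d ∧ d < b)) := by
  obtain ⟨rfl, height_eq⟩ := Prod.ext_iff.mp h
  obtain ⟨hax, hxb⟩ := hx
  obtain ⟨hcx, hxd⟩ := hy
  simp only [archPoint] at height_eq hcx hxd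
  have pos : 0 < (x - a) * (b - x) := mul_pos (sub_pos.mpr hax) (sub_pos.mpr hxb)
  have nonneg : 0 ≤ (x - c) * (d - x) := mul_nonneg (sub_nonneg.mpr hcx) (sub_nonneg.mpr hxd)
  have mul_eq : s = t ∧ (x - a) * (b - x) = (x - c) * (d - x) := by
    rcases Int.units_eq_one_or s with rfl | rfl <;> rcases Int.units_eq_one_or t with rfl | rfl <;>
      norm_num at height_eq ⊢ <;> linarith
  have hcx : c < x := hcx.lt_of_ne fun hc => by simp [hc, pos.ne'] at mul_eq
  have hxd : x < d := hxd.lt_of_ne fun hd => by simp [← hd, pos.ne'] at mul_eq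
  refine ⟨mul_eq.1, (interlaced_of_mul_eq_mul hax hxb hcx mul_eq.2).imp_right ?_⟩
  exact Or.imp (fun h => ⟨h.1, hcx.trans hxb, h.2⟩) (fun h => ⟨h.1, hax.trans hxd, h.2⟩)

lemma lineMap_mem_Icc {a b : ℝ} (hab : a ≤ b) (t : Set.Icc (0 : ℝ) 1) :
    AffineMap.lineMap a b (t : ℝ) ∈ Set.Icc a b :=
  (convex_Icc _ _).lineMap_mem (Set.left_mem_Icc.mpr hab) (Set.right_mem_Icc.mpr hab) t.2

lemma lineMap_mem_Ioo {a b : ℝ} (hab : a < b) {t : Set.Icc (0 : ℝ) 1} (h0 : (t : ℝ) ≠ 0)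
    (h1 : (t : ℝ) ≠ 1) : AffineMap.lineMap a b (t : ℝ) ∈ Set.Ioo a b :=
  ⟨(left_lt_lineMap_iff_lt (t.2.1.lt_of_ne' h0)).mpr hab,
    (lineMap_lt_right_iff_lt (t.2.2.lt_of_ne h1)).mpr hab⟩

lemma exists_sym2_eq_and_lt {pos : V → ℝ} (hpos : pos.Injective) (e : G.edgeSet) :
    ∃ u v, (e : Sym2 V) = s(u, v) ∧ G.Adj u v ∧ pos u < pos v := by
  obtain ⟨⟨u, v⟩, huv⟩ := e
  rcases (hpos.ne huv.ne).lt_or_gt with h | h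
  exacts [⟨u, v, rfl, huv, h⟩, ⟨v, u, Sym2.eq_swap, huv.symm, h⟩]

lemma isPlanar_of_twoPage {pos : V → ℝ} (hpos : pos.Injective) (page : V → V → ℤˣ)
    (hpage : ∀ a b c d, G.Adj a b → G.Adj c d → pos a < pos c → pos c < pos b → pos b < pos d →
      page a b ≠ page c d) : IsPlanar G := by
  choose l r hlr hadj hlt using exists_sym2_eq_and_lt (G := G) hpos
  let x (e : G.edgeSet) (t : Set.Icc (0 : ℝ) 1) : ℝ :=
    AffineMap.lineMap (pos (l e)) (pos (r e)) (t : ℝ)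
  have x_mem_Icc (e t) : x e t ∈ Set.Icc (pos (l e)) (pos (r e)) := lineMap_mem_Icc (hlt e).le t
  have x_injective (e) : (x e).Injective :=
    (AffineMap.lineMap_injective ℝ (hlt e).ne).comp Subtype.val_injective
  have x_mem_Ioo {e} {t : Set.Icc (0 : ℝ) 1} (h0 : (t : ℝ) ≠ 0) (h1 : (t : ℝ) ≠ 1) :
      x e t ∈ Set.Ioo (pos (l e)) (pos (r e)) := lineMap_mem_Ioo (hlt e) h0 h1
  refine ⟨fun v => (pos v, 0),
    fun e t => archPoint (page (l e) (r e)) (pos (l e)) (pos (r e)) (x e t),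
    fun u v h => hpos (Prod.ext_iff.mp h).1, fun e => ?_, fun e => ⟨l e, r e, hlr e, ?_, ?_⟩,
    fun e t t' h => x_injective e (Prod.ext_iff.mp h).1, fun e t h0 h1 v h => ?_,
    fun e e' hne t t' h => ?_⟩
  · simp only [archPoint, x, AffineMap.lineMap_apply]
    fun_prop
  · simp [x, archPoint]
  · simp [x, archPoint]
  · have := x_mem_Ioo (e := e) h0 h1
    have height_ne_zero : (x e t - pos (l e)) * (pos (r e) - x e t) ≠ 0 :=
      (mul_pos (sub_pos.mpr this.1) (sub_pos.mpr this.2)).ne'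
    simpa [archPoint, height_ne_zero] using congrArg Prod.snd h
  · by_cases h0 : (t : ℝ) = 0
    · exact ⟨l e, by simp [x, h0, archPoint]⟩
    by_cases h1 : (t : ℝ) = 1
    · exact ⟨r e, by simp [x, h1, archPoint]⟩
    obtain ⟨same_page, ⟨hl, hr⟩ | ⟨hac, hcb, hbd⟩ | ⟨hca, had, hdb⟩⟩ :=
      interlaced_of_archPoint_eq (x_mem_Ioo h0 h1) (x_mem_Icc e' t') h
    · exact absurd (Subtype.ext (by rw [hlr e, hlr e', hpos hl, hpos hr])) hne
    · exact absurd same_page (hpage _ _ _ _ (hadj e) (hadj e') hac hcb hbd)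
    · exact absurd same_page.symm (hpage _ _ _ _ (hadj e') (hadj e) hca had hdb)

/- Vertices sharing a slot are spread out in any order, hence the weak inequalities. -/
lemma isPlanar_of_slots [Countable V] [LinearOrder α] (slot : V → α) (page : α → α → ℤˣ)
    (hpage : ∀ a b c d, G.Adj a b → G.Adj c d → slot a ≤ slot c → slot c ≤ slot b →
      slot b ≤ slot d → a ≠ c → c ≠ b → b ≠ d → page (slot a) (slot b) ≠ page (slot c) (slot d)) :
    IsPlanar G := by
  obtain ⟨index, hindex⟩ := exists_injective_nat V
  let lex (v : V) : α ×ₗ ℕ := toLex (slot v, index v)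
  have lex_injective : lex.Injective := fun u v h =>
    hindex (Prod.ext_iff.mp (toLex.injective h)).2
  let : LinearOrder V := LinearOrder.lift' lex lex_injective
  have slot_le {u v : V} (huv : u < v) : slot u ≤ slot v := Prod.Lex.monotone_fst _ _ huv.le
  obtain ⟨pos⟩ := Order.embedding_from_countable_to_dense V ℝ
  refine isPlanar_of_twoPage pos.injective (fun u v => page (slot u) (slot v))
    fun a b c d hab hcd hac hcb hbd => ?_
  simp only [pos.lt_iff_lt] at hac hcb hbd
  exact hpage a b c d hab hcd (slot_le hac) (slot_le hcb) (slot_le hbd) hac.ne hcb.ne hbd.ne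

lemma isPlanar_of_consecutive_or_extreme {pos : V → ℕ} {N : ℕ}
    (hpos : pos.Injective) (hN : ∀ v, pos v ≤ N)
    (hG : ∀ u v, G.Adj u v → pos u < pos v → pos u = 0 ∨ pos v = N ∨ pos v = pos u + 1) :
    IsPlanar G := by
  refine isPlanar_of_twoPage (Nat.cast_injective.comp hpos)
    (fun _ v => if pos v = N then -1 else 1) fun a b c d _ hcd hac hcb hbd => ?_
  simp only [Function.comp_apply, Nat.cast_lt] at hac hcb hbd
  have hb : pos b ≠ N := (hbd.trans_le (hN d)).ne
  have hd : pos d = N := by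
    rcases hG c d hcd (hcb.trans hbd) with h | h | h <;> omega
  simp [hb, hd]

end TwoPageDrawings

/-- Vertices of `K_{2,4p,4p}`: two apices, and two sides that are each cut into `p` blocks of
four. -/
inductive Vertex (p : ℕ)
  | apex (i : Fin 2)
  | left (r : Fin p) (i : Fin 4)
  | right (r : Fin p) (k : Fin 4)

namespace Vertex

variable {p : ℕ}

/-- The index of the part of `K_{2,4p,4p}` containing a vertex. -/
def part : Vertex p → Fin 3
  | apex _ => 0
  | left _ _ => 1
  | right _ _ => 2

/-- The positions of the left vertices of a block along a path through the whole block, on which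
the eight vertices are numbered from `1`. -/
def leftPos : Fin 4 → ℕ := ![7, 1, 3, 5]

/-- The positions of the right vertices of a block along the same path. -/
def rightPos : Fin 4 → ℕ := ![6, 2, 8, 4]

/-- The position of a vertex in the last layer: the paths of all blocks are concatenated, and the
apices are placed at both ends. -/
def pos : Vertex p → ℕ
  | apex i => if i = 0 then 0 else 8 * p + 1
  | left r i => 8 * r + leftPos i
  | right r k => 8 * r + rightPos k

lemma leftPos_mem_Icc (i : Fin 4) : leftPos i ∈ Set.Icc 1 8 := by
  decide +revert

lemma rightPos_mem_Icc (k : Fin 4) : rightPos k ∈ Set.Icc 1 8 := by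
  decide +revert

lemma pos_le (v : Vertex p) : v.pos ≤ 8 * p + 1 := by
  cases v <;> grind [pos, leftPos_mem_Icc, rightPos_mem_Icc]

lemma leftPos_injective : leftPos.Injective := by decide

lemma rightPos_injective : rightPos.Injective := by decide

lemma leftPos_ne_rightPos (i k : Fin 4) : leftPos i ≠ rightPos k := by
  decide +revert

lemma pos_injective : (pos : Vertex p → ℕ).Injective := by
  rintro (i | ⟨r, i⟩ | ⟨r, i⟩) (j | ⟨s, j⟩ | ⟨s, j⟩) h <;> simp only [pos] at h <;>
    grind [leftPos_mem_Icc, rightPos_mem_Icc, leftPos_ne_rightPos, leftPos_injective.eq_iff,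
      rightPos_injective.eq_iff]

/-- The last layer: the path through the blocks, from apex to apex, and all edges at an apex. -/
def lastLayer (p : ℕ) : SimpleGraph (Vertex p) :=
  fromRel fun u v => u.pos = 0 ∨ u.pos = 8 * p + 1 ∨ v.pos = u.pos + 1

lemma isPlanar_lastLayer : IsPlanar (lastLayer p) := by
  refine isPlanar_of_consecutive_or_extreme pos_injective pos_le fun u v huv hlt => ?_
  have := v.pos_le
  rcases ((fromRel_adj _ _ _).mp huv).2 with h | h <;> omega

/-- Whether the layer of block `r` joins the `i`-th left vertex of a block to the `k`-th right
vertex of a block. The Boolean arguments tell whether these blocks are block `r`. A left and a right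
vertex of different blocks lie either in equal or in different halves of their blocks, and are
accordingly joined in the layer of the left or of the right vertex. -/
def linked : Bool → Bool → Fin 4 → Fin 4 → Bool
  | true, true, i, k => leftPos i ≠ rightPos k + 1 ∧ rightPos k ≠ leftPos i + 1
  | true, false, i, k => i.val / 2 = k.val / 2
  | false, true, i, k => i.val / 2 ≠ k.val / 2
  | false, false, _, _ => false

/-- The layer of block `r`: the edges inside block `r` that are off its path, and half of the edges
between block `r` and every other block. -/
def blockLayer (r : Fin p) : SimpleGraph (Vertex p) :=
  fromRel fun
    | left s i, right t k => linked (s = r) (t = r) i k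
    | _, _ => False

/-- The slots on the spine, in the drawing of a block layer, of the left vertices of the block
itself and of the other blocks. Vertices in equal halves of the other blocks have the same
neighbours, so they share a slot. -/
def leftSlot : Bool → Fin 4 → Fin 13
  | true => ![0, 2, 6, 8]
  | false => ![10, 10, 4, 4]

/-- The slots on the spine, in the drawing of a block layer, of the right vertices of the block
itself and of the other blocks. -/
def rightSlot : Bool → Fin 4 → Fin 13
  | true => ![3, 5, 9, 11]
  | false => ![1, 1, 7, 7]

/-- The slot on the spine of each vertex in the drawing of the layer of block `r`. -/
def slot (r : Fin p) : Vertex p → Fin 13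
  | apex _ => 12
  | left s i => leftSlot (s = r) i
  | right s k => rightSlot (s = r) k

/-- The pairs of slots joined above the spine. -/
def upperChords : List (Fin 13 × Fin 13) :=
  [(0, 1), (3, 4), (6, 7), (9, 10), (2, 3), (8, 9), (0, 11), (0, 5), (5, 8)]

/-- The pairs of slots joined below the spine. -/
def lowerChords : List (Fin 13 × Fin 13) :=
  [(1, 2), (4, 5), (7, 8), (10, 11), (2, 11), (2, 9), (6, 9), (3, 6)]

/-- The page of the edges joining two slots. -/
def page (a b : Fin 13) : ℤˣ :=
  if (a, b) ∈ upperChords then 1 else -1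

/-- The slots that may hold several vertices. -/
def sharedSlots : List (Fin 13) := [1, 4, 7, 10, 12]

lemma mem_chords_of_linked (o o' : Bool) (i k : Fin 4) (h : linked o o' i k) :
    (leftSlot o i, rightSlot o' k) ∈ upperChords ++ lowerChords ∨
      (rightSlot o' k, leftSlot o i) ∈ upperChords ++ lowerChords := by
  cases o <;> cases o' <;> decide +revert +revert

lemma lt_of_mem_chords : ∀ e ∈ upperChords ++ lowerChords, e.1 < e.2 := by
  simp [upperChords, lowerChords]

/-- Some vertex in slot `a` may be placed before another vertex in slot `b`. -/
abbrev MayPrecede (a b : Fin 13) : Prop := a < b ∨ a = b ∧ a ∈ sharedSlots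

lemma page_ne_of_crossing : ∀ e ∈ upperChords ++ lowerChords, ∀ f ∈ upperChords ++ lowerChords,
    MayPrecede e.1 f.1 → MayPrecede f.1 e.2 → MayPrecede e.2 f.2 →
      page e.1 e.2 ≠ page f.1 f.2 := by
  decide

lemma leftSlot_ne_rightSlot (o o' : Bool) (i k : Fin 4) : leftSlot o i ≠ rightSlot o' k := by
  decide +revert

lemma leftSlot_mem_sharedSlots_of_eq {o o' : Bool} {i j : Fin 4} (h : leftSlot o i = leftSlot o' j)
    (hne : ¬ (o ∧ o' ∧ i = j)) : leftSlot o i ∈ sharedSlots := by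
  decide +revert

lemma rightSlot_mem_sharedSlots_of_eq {o o' : Bool} {i j : Fin 4}
    (h : rightSlot o i = rightSlot o' j) (hne : ¬ (o ∧ o' ∧ i = j)) :
    rightSlot o i ∈ sharedSlots := by
  decide +revert

lemma mayPrecede_slot {r : Fin p} {u v : Vertex p} (hne : u ≠ v) (hle : slot r u ≤ slot r v) :
    MayPrecede (slot r u) (slot r v) := by
  refine hle.lt_or_eq.imp_right fun h => ⟨h, ?_⟩
  match u, v with
  | apex _, _ => simp [slot, sharedSlots]
  | _, apex _ => rw [h]; simp [slot, sharedSlots]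
  | left _ _, right _ _ => exact (leftSlot_ne_rightSlot _ _ _ _ h).elim
  | right _ _, left _ _ => exact (leftSlot_ne_rightSlot _ _ _ _ h.symm).elim
  | left _ _, left _ _ => exact leftSlot_mem_sharedSlots_of_eq h (by grind)
  | right _ _, right _ _ => exact rightSlot_mem_sharedSlots_of_eq h (by grind)

lemma slot_mem_chords_of_adj {r : Fin p} {u v : Vertex p} (h : (blockLayer r).Adj u v)
    (hle : slot r u ≤ slot r v) : (slot r u, slot r v) ∈ upperChords ++ lowerChords := by
  have mem_or : (slot r u, slot r v) ∈ upperChords ++ lowerChords ∨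
      (slot r v, slot r u) ∈ upperChords ++ lowerChords := by
    match u, v, ((fromRel_adj _ _ _).mp h).2 with
    | left _ _, right _ _, .inl h => exact mem_chords_of_linked _ _ _ _ h
    | right _ _, left _ _, .inr h => exact (mem_chords_of_linked _ _ _ _ h).symm
  exact mem_or.resolve_right fun h => (lt_of_mem_chords _ h).not_ge hle

lemma isPlanar_blockLayer (r : Fin p) : IsPlanar (blockLayer r) := by
  have : Countable (Vertex p) := pos_injective.countable
  refine isPlanar_of_slots (slot r) page fun a b c d hab hcd hac hcb hbd hac' hcb' hbd' => ?_
  exact page_ne_of_crossing _ (slot_mem_chords_of_adj hab (hac.trans hcb)) _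
    (slot_mem_chords_of_adj hcd (hcb.trans hbd)) (mayPrecede_slot hac' hac)
    (mayPrecede_slot hcb' hcb) (mayPrecede_slot hbd' hbd)

lemma lastLayer_or_blockLayer_adj_left_right (r s : Fin p) (i k : Fin 4) :
    (lastLayer p).Adj (left r i) (right s k) ∨
      ∃ t, (blockLayer t).Adj (left r i) (right s k) := by
  have adj_of_linked {t : Fin p} (h : linked (r = t) (s = t) i k) :
      (blockLayer t).Adj (left r i) (right s k) := (fromRel_adj _ _ _).mpr ⟨nofun, .inl h⟩
  rcases eq_or_ne r s with rfl | hrs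
  · by_cases h : linked true true i k
    · exact .inr ⟨r, adj_of_linked (by simpa using h)⟩
    · refine .inl ((fromRel_adj _ _ _).mpr ⟨nofun, ?_⟩)
      simp only [linked, pos] at h ⊢
      grind
  · by_cases h : i.val / 2 = k.val / 2
    · exact .inr ⟨r, adj_of_linked (by simp [linked, hrs.symm, h])⟩
    · exact .inr ⟨s, adj_of_linked (by simp [linked, hrs, h])⟩

lemma lastLayer_adj_apex (i : Fin 2) {v : Vertex p} (h : apex i ≠ v) :
    (lastLayer p).Adj (apex i) v := by
  refine (fromRel_adj _ _ _).mpr ⟨h, .inl ?_⟩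
  simp only [pos]
  grind

lemma exists_layer_adj {u v : Vertex p} (h : u.part ≠ v.part) :
    (lastLayer p).Adj u v ∨ ∃ r, (blockLayer r).Adj u v := by
  have hne : u ≠ v := ne_of_apply_ne part h
  match u, v with
  | apex i, _ => exact .inl (lastLayer_adj_apex i hne)
  | _, apex i => exact .inl (lastLayer_adj_apex i hne.symm).symm
  | left _ _, right _ _ => exact lastLayer_or_blockLayer_adj_left_right ..
  | right r k, left s i =>
    simpa only [adj_comm] using lastLayer_or_blockLayer_adj_left_right s r i k
  | left _ _, left _ _ | right _ _, right _ _ => exact absurd rfl h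

end Vertex

lemma isUnionOfPlanar_completeMultipartiteGraph {m p : ℕ} (hm : m ≤ 2) :
    IsUnionOfPlanar (completeMultipartiteGraph
      (![Fin m, Fin (p * 4), Fin (p * 4)] : Fin 3 → Type)) (p + 1) := by
  let φ : (Σ i, (![Fin m, Fin (p * 4), Fin (p * 4)] : Fin 3 → Type) i) → Vertex p
    | ⟨0, a⟩ => .apex (Fin.castLE hm a)
    | ⟨1, a⟩ => .left (finProdFinEquiv.symm a).1 (finProdFinEquiv.symm a).2
    | ⟨2, a⟩ => .right (finProdFinEquiv.symm a).1 (finProdFinEquiv.symm a).2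
  have part_φ : ∀ v, (φ v).part = v.1
    | ⟨0, _⟩ | ⟨1, _⟩ | ⟨2, _⟩ => rfl
  have φ_injective : φ.Injective := by
    rintro ⟨i, a⟩ ⟨j, b⟩ h
    obtain rfl : i = j := (part_φ ⟨i, a⟩).symm.trans ((congrArg _ h).trans (part_φ ⟨j, b⟩))
    congr 1
    match i with
    | 0 => exact Fin.castLE_injective hm (Vertex.apex.inj h)
    | 1 => exact finProdFinEquiv.symm.injective (Prod.ext_iff.mpr (Vertex.left.inj h))
    | 2 => exact finProdFinEquiv.symm.injective (Prod.ext_iff.mpr (Vertex.right.inj h))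
  refine isUnionOfPlanar_of_cover (H := Fin.snoc Vertex.blockLayer (Vertex.lastLayer p)) ?_
    ⟨φ, φ_injective⟩ fun u v huv => ?_
  · simp [Fin.forall_fin_succ', Vertex.isPlanar_blockLayer, Vertex.isPlanar_lastLayer]
  · rw [Fin.exists_fin_succ']
    have := Vertex.exists_layer_adj (u := φ u) (v := φ v) (by rwa [part_φ, part_φ])
    simpa only [Fin.snoc_castSucc, Fin.snoc_last] using! this.symm

lemma completeBipartiteGraph_isContained_completeMultipartiteGraph {ι : Type*} (V : ι → Type*)
    {i j : ι} (hij : i ≠ j) :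
    completeBipartiteGraph (V i) (V j) ⊑ completeMultipartiteGraph V := by
  refine ⟨⟨⟨Sum.elim (Sigma.mk i) (Sigma.mk j), ?_⟩, ?_⟩⟩
  · rintro (_ | _) (_ | _) <;> simp [hij, hij.symm]
  · exact sigma_mk_injective.sumElim sigma_mk_injective fun _ _ h => hij (Sigma.mk.inj h).1

lemma thickness_completeMultipartiteGraph_of_four_dvd {m n : ℕ} (hm : m ≤ 2) (hn : 1 ≤ n)
    (h : n % 4 = 0) :
    thickness (completeMultipartiteGraph (![Fin m, Fin n, Fin n] : Fin 3 → Type)) = n / 4 + 1 := by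
  obtain ⟨p, rfl⟩ : ∃ p, n = p * 4 := ⟨n / 4, by omega⟩
  rw [Nat.mul_div_cancel _ (by norm_num)]
  let parts : Fin 3 → Type := ![Fin m, Fin (p * 4), Fin (p * 4)]
  obtain ⟨bipartite⟩ := completeBipartiteGraph_isContained_completeMultipartiteGraph parts
    (show (1 : Fin 3) ≠ 2 by decide)
  have isLeast : IsLeast {k | IsUnionOfPlanar (completeMultipartiteGraph parts) k} (p + 1) :=
    ⟨isUnionOfPlanar_completeMultipartiteGraph hm, fun k hk => by
      have := (hk.of_copy bipartite).lt_four_mul hn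
      omega⟩
  exact isLeast.csInf_eq

theorem thickness_K1nn_eq_K2nn_of_four_dvd (n : ℕ) (hn : 1 ≤ n) (h : n % 4 = 0) :
    thickness (completeMultipartiteGraph ![Fin 1, Fin n, Fin n]) =
      thickness (completeMultipartiteGraph ![Fin 2, Fin n, Fin n]) ∧
    thickness (completeMultipartiteGraph ![Fin 1, Fin n, Fin n]) = n / 4 + 1 := by
  rw [thickness_completeMultipartiteGraph_of_four_dvd one_le_two hn h,
    thickness_completeMultipartiteGraph_of_four_dvd le_rfl hn h]
  exact ⟨rfl, rfl⟩
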